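/- Let N ≥ 3 and let w₁ ≥ w₂ ≥ … ≥ w_N ≥ 0 be real numbers with Σₖ wₖ = 1 and Σ_{k=3}^{N} wₖ ≤ 2w₂. Then there exist nonnegative reals a, b with w₂ ≥ a ≥ b ≥ 0 and a + b = Σ_{k=3}^{N} wₖ such that (w₁, w₂, a, b) is a probability vector whose Shannon entropy is at most the Shannon entropy of (w₁, …, w_N). That is, any scheme with at most twice the second weight left in its tail can be collapsed to a four-outcome distribution with the same two largest weights and no greater entropy. -/

import Mathlib

noncomputable section

/-- `−p·log₂ p`, one term of the Shannon entropy (equals `0` at `p = 0`). -/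
def nmlb (p : ℝ) : ℝ := -(p * Real.logb 2 p)

theorem nmlb_concave : ConcaveOn ℝ (Set.Ici (0 : ℝ)) nmlb := by
  have h := Real.concaveOn_negMulLog.smul (c := (Real.log 2)⁻¹)
    (inv_nonneg.mpr (Real.log_nonneg (by norm_num)))
  have e : nmlb = fun x => (Real.log 2)⁻¹ • x.negMulLog := by
    funext x
    simp only [nmlb, Real.negMulLog, Real.logb, smul_eq_mul]
    ring
  rw [e]
  exact h

theorem nmlb_spread (p q r s : ℝ) (hs : 0 ≤ s) (hsp : s ≤ p) (hpr : p ≤ r)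
    (h : p + q = r + s) : nmlb r + nmlb s ≤ nmlb p + nmlb q := by
  rcases eq_or_lt_of_le (hsp.trans hpr) with he | hlt
  · have h1 : p = r := by linarith
    have h2 : q = s := by linarith
    rw [h1, h2]
  · have hd : 0 < r - s := by linarith
    have hu : 0 ≤ (p - s) / (r - s) := div_nonneg (by linarith) hd.le
    have hv : 0 ≤ (r - p) / (r - s) := div_nonneg (by linarith) hd.le
    have huv : (p - s) / (r - s) + (r - p) / (r - s) = 1 := by
      field_simp
      ring
    have hr : r ∈ Set.Ici (0 : ℝ) := by
      simp only [Set.mem_Ici]; linarith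
    have hs' : s ∈ Set.Ici (0 : ℝ) := hs
    have c1 := nmlb_concave.2 hr hs' hu hv huv
    have c2 := nmlb_concave.2 hs' hr hu hv huv
    simp only [smul_eq_mul] at c1 c2
    have e1 : (p - s) / (r - s) * r + (r - p) / (r - s) * s = p := by
      field_simp
      ring
    have e2 : (p - s) / (r - s) * s + (r - p) / (r - s) * r = q := by
      have : q = r + s - p := by linarith
      rw [this]
      field_simp
      ring
    rw [e1] at c1
    rw [e2] at c2
    have e3 : ((p - s) / (r - s) + (r - p) / (r - s)) * (nmlb r + nmlb s)
      = nmlb r + nmlb s := by rw [huv, one_mul]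
    linarith

theorem nmlb_zero : nmlb 0 = 0 := by simp [nmlb]

theorem nmlb_merge (p q : ℝ) (hp : 0 ≤ p) (hq : 0 ≤ q) : nmlb (p + q) ≤ nmlb p + nmlb q := by
  have := nmlb_spread p q (p + q) 0 le_rfl hp (by linarith) (by ring)
  rwa [nmlb_zero, add_zero] at this

theorem nmlb_collapse {ι : Type*} (m : ℝ) (hm : 0 ≤ m) (w : ι → ℝ) (hw : ∀ i, 0 ≤ w i)
    (s : Finset ι) (hwm : ∀ i ∈ s, w i ≤ m) (hs : ∑ i ∈ s, w i ≤ 2 * m) :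
    ∃ a b : ℝ, 0 ≤ a ∧ a ≤ m ∧ 0 ≤ b ∧ b ≤ m ∧ a + b = ∑ i ∈ s, w i ∧
      nmlb a + nmlb b ≤ ∑ i ∈ s, nmlb (w i) := by
  classical
  induction s using Finset.induction_on with
  | empty => exact ⟨0, 0, le_rfl, hm, le_rfl, hm, by simp, by simp [nmlb_zero]⟩
  | insert x s hx ih =>
    rw [Finset.sum_insert hx] at hs
    rw [Finset.sum_insert hx, Finset.sum_insert hx]
    have hx0 := hw x
    have hxm := hwm x (Finset.mem_insert_self x s)
    obtain ⟨a, b, ha, ham, hb, hbm, hab, hf⟩ :=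
      ih (fun i hi => hwm i (Finset.mem_insert_of_mem hi)) (by linarith)
    by_cases hc : a + w x ≤ m
    · refine ⟨a + w x, b, by linarith, hc, hb, hbm, by linarith, ?_⟩
      have := nmlb_merge a (w x) ha hx0
      linarith
    · push Not at hc
      have h1 := nmlb_spread a (w x) m (a + w x - m) (by linarith) (by linarith) ham (by ring)
      have h2 := nmlb_merge (a + w x - m) b (by linarith) hb
      exact ⟨m, a + w x - m + b, hm, le_rfl, by linarith, by linarith, by linarith, by linarith⟩

/-- Any decreasingly ordered probability vector `(w₁, …, w_N)` whose tail `Σ_{k≥3} wₖ` is at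
most `2w₂` can be collapsed to a four-outcome distribution `(w₁, w₂, a, b)` with the same
two largest weights, `w₂ ≥ a ≥ b ≥ 0`, `a + b = Σ_{k≥3} wₖ`, and no greater Shannon
entropy. -/
theorem collapse_to_four_outcomes (N : ℕ) (hN : 3 ≤ N) (w : Fin N → ℝ)
    (hord : ∀ i j : Fin N, i ≤ j → w j ≤ w i)
    (hnn : ∀ k, 0 ≤ w k) (hsum : ∑ k, w k = 1)
    (htail : (∑ k ∈ Finset.univ.filter (fun k : Fin N => 2 ≤ (k : ℕ)), w k)
        ≤ 2 * w ⟨1, by omega⟩) :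
    ∃ a b : ℝ, a ≤ w ⟨1, by omega⟩ ∧ b ≤ a ∧ 0 ≤ b
      ∧ a + b = (∑ k ∈ Finset.univ.filter (fun k : Fin N => 2 ≤ (k : ℕ)), w k)
      ∧ nmlb (w ⟨0, by omega⟩) + nmlb (w ⟨1, by omega⟩) + nmlb a + nmlb b
          ≤ ∑ k, nmlb (w k) := by
  obtain ⟨n, rfl⟩ : ∃ n, N = n + 2 := ⟨N - 2, by omega⟩
  obtain ⟨a, b, ha, ham, hb, hbm, hab, hf⟩ := nmlb_collapse (w ⟨1, by omega⟩) (hnn _) w hnn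
    (Finset.univ.filter (fun k : Fin (n + 2) => 2 ≤ (k : ℕ)))
    (fun i hi => hord _ _ (by
      have := (Finset.mem_filter.mp hi).2
      rw [Fin.le_def]
      show 1 ≤ (i : ℕ)
      omega)) htail
  have key : ∑ k, nmlb (w k) = nmlb (w ⟨0, by omega⟩) + nmlb (w ⟨1, by omega⟩)
      + ∑ k ∈ Finset.univ.filter (fun k : Fin (n + 2) => 2 ≤ (k : ℕ)), nmlb (w k) := by
    rw [Finset.sum_filter, Fin.sum_univ_succ, Fin.sum_univ_succ, Fin.sum_univ_succ,
      Fin.sum_univ_succ]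
    simp [← add_assoc]
  rcases le_total b a with h | h
  · exact ⟨a, b, ham, h, hb, hab, by linarith⟩
  · exact ⟨b, a, hbm, h, ha, by linarith, by linarith⟩

end
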